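/- Let Y be a finite set of unit vectors in ℝ^n whose pairwise inner products take exactly three values α > β > γ (a 3-distance spherical code), and suppose the annihilator polynomial F(x) = Π_{s∈{α,β,γ}} (x−s)/(1−s) has Gegenbauer expansion F = Σ_{k=0}^3 f_k Q_k with all f_k > 0 and f₀ = 1/|Y|. Then Y is a spherical 3-design. -/

import Mathlib

open scoped RealInnerProductSpace
open MeasureTheory Finset

/-- λ_k = k/(n−2+2k), coefficients of the Gegenbauer recurrence for dimension n. -/
noncomputable def gegLam (n : ℝ) (k : ℕ) : ℝ := k / (n - 2 + 2 * k)

/-- Gegenbauer polynomials Q_k for dimension n (Delsarte–Goethals–Seidel normalization):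
Q₀(t)=1, Q₁(t)=n·t, λ_{k+1}Q_{k+1}(t) = t·Q_k(t) − (1−λ_{k−1})Q_{k−1}(t). -/
noncomputable def geg (n : ℝ) : ℕ → ℝ → ℝ
  | 0, _ => 1
  | 1, t => n * t
  | (k + 2), t => (t * geg n (k + 1) t - (1 - gegLam n k) * geg n k t) / gegLam n (k + 2)

/-!
With `n` the dimension, the double sum over `Y × Y` of `Q_k(⟪a, b⟫)`, for `k = 1, 2, 3`, is a
positive multiple of the squared norm of the trace-free part of the tensor `∑ y ∈ Y, y ^ ⊗k`.
Summing `F = ∑ f_k Q_k` over all pairs of points of `Y` gives at most `|Y| F(1) ≤ |Y|² f₀`, which is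
already the contribution of `k = 0`. The other contributions are nonnegative, so they all vanish,
and this determines the moments of `Y` of degree at most three: the odd ones are zero and the
second moment is `|Y| / n` times the identity. By invariance under isometries these are also the
moments of the sphere.
-/

section Gegenbauer

lemma geg_one (n t : ℝ) : geg n 1 t = n * t := rfl

lemma geg_two {n : ℝ} (hn : 0 < n) (t : ℝ) :
    geg n 2 t = n * (n + 2) / 2 * (t ^ 2 - 1 / n) := by
  have hlam : gegLam n 2 = 2 / (n + 2) := by
    rw [gegLam]
    push_cast
    ring_nf
  rw [geg, hlam, geg_one, geg, gegLam]
  field_simp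
  simp

lemma geg_three {n : ℝ} (hn : 0 < n) (t : ℝ) :
    geg n 3 t = n * (n + 2) * (n + 4) / 6 * (t ^ 3 - 3 / (n + 2) * t) := by
  have hlam_one : gegLam n 1 = 1 / n := by simp [gegLam]
  have hlam_three : gegLam n 3 = 3 / (n + 4) := by
    rw [gegLam]
    push_cast
    ring_nf
  rw [geg, hlam_one, hlam_three, geg_two hn, geg_one]
  field_simp
  ring

end Gegenbauer

section SymmDelta

variable {ι : Type*} [DecidableEq ι]

/-- Three times the symmetrization of the tensor `δ ⊗ v`. As `v` varies, these tensors form the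
orthogonal complement of the trace-free tensors among the symmetric 3-tensors. -/
def symmDelta (v : ι → ℝ) (i j k : ι) : ℝ :=
  (if i = j then v k else 0) + (if i = k then v j else 0) + if j = k then v i else 0

lemma symmDelta_swap_left (v : ι → ℝ) (i j k : ι) : symmDelta v i j k = symmDelta v j i k := by
  simp only [symmDelta, eq_comm (a := j) (b := i)]
  ring

lemma symmDelta_swap_right (v : ι → ℝ) (i j k : ι) : symmDelta v i j k = symmDelta v i k j := by
  simp only [symmDelta, eq_comm (a := k) (b := j)]
  ring

variable [Fintype ι]

lemma sum_symmDelta_diag (v : ι → ℝ) (i : ι) :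
    ∑ j, symmDelta v i j j = (Fintype.card ι + 2) * v i := by
  simp only [symmDelta, sum_add_distrib, sum_ite_eq, mem_univ, if_true, sum_const, card_univ,
    nsmul_eq_mul]
  ring

lemma sum_mul_symmDelta {T : ι → ι → ι → ℝ} (hleft : ∀ i j k, T i j k = T j i k)
    (hright : ∀ i j k, T i j k = T i k j) (v : ι → ℝ) :
    ∑ i, ∑ j, ∑ k, T i j k * symmDelta v i j k = 3 * ∑ i, (∑ j, T i j j) * v i := by
  have hjk : ∑ i, ∑ j, ∑ k, (if j = k then T i j k * v i else 0) = ∑ i, (∑ j, T i j j) * v i := by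
    simp [sum_mul]
  have hik : ∑ i, ∑ j, ∑ k, (if i = k then T i j k * v j else 0) = ∑ i, (∑ j, T i j j) * v i := by
    rw [← hjk, sum_comm]
    simp only [hleft]
  have hij : ∑ i, ∑ j, ∑ k, (if i = j then T i j k * v k else 0) = ∑ i, (∑ j, T i j j) * v i := by
    rw [← hik]
    refine sum_congr rfl fun i _ => ?_
    rw [sum_comm]
    simp only [hright i]
  simp only [symmDelta, mul_add, mul_ite, mul_zero, sum_add_distrib, hij, hik, hjk]
  ring

end SymmDelta

section Tensor

variable {ι : Type*} [Fintype ι]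

lemma sum_sq_sub_scalar [DecidableEq ι] (M : ι → ι → ℝ) (c : ℝ) :
    ∑ i, ∑ j, (M i j - if i = j then c else 0) ^ 2 =
      ∑ i, ∑ j, M i j ^ 2 - 2 * c * ∑ i, M i i + Fintype.card ι * c ^ 2 := by
  have hexpand (i j : ι) : (M i j - if i = j then c else 0) ^ 2 =
      M i j ^ 2 - (if i = j then 2 * c * M i j else 0) + if i = j then c ^ 2 else 0 := by
    split_ifs <;> ring
  simp [hexpand, sum_add_distrib, sum_sub_distrib, mul_sum]

lemma sum_trace_sq_le_sum_sq {T : ι → ι → ι → ℝ} (hleft : ∀ i j k, T i j k = T j i k)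
    (hright : ∀ i j k, T i j k = T i k j) :
    3 / (Fintype.card ι + 2 : ℝ) * ∑ i, (∑ j, T i j j) ^ 2 ≤ ∑ i, ∑ j, ∑ k, T i j k ^ 2 := by
  classical
  set v : ι → ℝ := fun i => ∑ j, T i j j
  set c : ℝ := 1 / (Fintype.card ι + 2)
  have hcross : ∑ i, ∑ j, ∑ k, T i j k * symmDelta v i j k = 3 * ∑ i, v i ^ 2 := by
    simp only [sum_mul_symmDelta hleft hright, sq, v]
  have hnorm : ∑ i, ∑ j, ∑ k, symmDelta v i j k ^ 2 =
      3 * (Fintype.card ι + 2) * ∑ i, v i ^ 2 := by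
    simp only [sq, sum_mul_symmDelta (symmDelta_swap_left v) (symmDelta_swap_right v),
      sum_symmDelta_diag, mul_assoc, ← mul_sum]
  have hexpand : ∑ i, ∑ j, ∑ k, (T i j k - c * symmDelta v i j k) ^ 2 =
      ∑ i, ∑ j, ∑ k, T i j k ^ 2 - 2 * c * ∑ i, ∑ j, ∑ k, T i j k * symmDelta v i j k +
        c ^ 2 * ∑ i, ∑ j, ∑ k, symmDelta v i j k ^ 2 := by
    simp only [mul_sum, ← sum_sub_distrib, ← sum_add_distrib]
    congr! 3
    ring
  have hnonneg : 0 ≤ ∑ i, ∑ j, ∑ k, (T i j k - c * symmDelta v i j k) ^ 2 := by positivity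
  have hc : c * (Fintype.card ι + 2) = 1 := one_div_mul_cancel (by positivity)
  have hthree : 3 / (Fintype.card ι + 2 : ℝ) = 3 * c := by ring
  rw [hexpand, hcross, hnorm] at hnonneg
  rw [hthree]
  linear_combination hnonneg + 3 * c * (∑ i, v i ^ 2) * hc

end Tensor

section Moments

variable {ι : Type*} [Fintype ι]

lemma sum_coord_mul_coord (a b : EuclideanSpace ℝ ι) : ∑ i, a i * b i = ⟪a, b⟫ := by
  simp [PiLp.inner_apply, mul_comm]

lemma sum_coord_mul_self {a : EuclideanSpace ℝ ι} (ha : ‖a‖ = 1) : ∑ i, a i * a i = 1 := by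
  rw [sum_coord_mul_coord, real_inner_self_eq_norm_sq, ha, one_pow]

lemma sum_sum_sum_mul_eq_sum_sq {κ E : Type*} [Fintype κ] (Y : Finset E) (φ : κ → E → ℝ) :
    ∑ a ∈ Y, ∑ b ∈ Y, ∑ m, φ m a * φ m b = ∑ m, (∑ y ∈ Y, φ m y) ^ 2 := by
  simp_rw [sq, sum_mul_sum, sum_comm (s := Y) (t := univ)]

lemma sum_sum_inner (Y : Finset (EuclideanSpace ℝ ι)) :
    ∑ a ∈ Y, ∑ b ∈ Y, ⟪a, b⟫ = ∑ i, (∑ y ∈ Y, y i) ^ 2 := by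
  simp only [← sum_coord_mul_coord, sum_sum_sum_mul_eq_sum_sq Y fun i y => y i]

lemma sum_sum_inner_sq (Y : Finset (EuclideanSpace ℝ ι)) :
    ∑ a ∈ Y, ∑ b ∈ Y, ⟪a, b⟫ ^ 2 = ∑ i, ∑ j, (∑ y ∈ Y, y i * y j) ^ 2 := by
  have hpow (a b : EuclideanSpace ℝ ι) :
      ⟪a, b⟫ ^ 2 = ∑ m : ι × ι, a m.1 * a m.2 * (b m.1 * b m.2) := by
    simp only [← sum_coord_mul_coord, sq, sum_mul_sum, Fintype.sum_prod_type, mul_mul_mul_comm]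
  simp only [hpow]
  rw [sum_sum_sum_mul_eq_sum_sq Y fun (m : ι × ι) y => y m.1 * y m.2, Fintype.sum_prod_type]

lemma sum_sum_inner_cube (Y : Finset (EuclideanSpace ℝ ι)) :
    ∑ a ∈ Y, ∑ b ∈ Y, ⟪a, b⟫ ^ 3 = ∑ i, ∑ j, ∑ k, (∑ y ∈ Y, y i * y j * y k) ^ 2 := by
  have hpow (a b : EuclideanSpace ℝ ι) : ⟪a, b⟫ ^ 3 =
      ∑ m : ι × ι × ι, a m.1 * a m.2.1 * a m.2.2 * (b m.1 * b m.2.1 * b m.2.2) := by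
    simp only [← sum_coord_mul_coord, pow_succ, pow_zero, one_mul, sum_mul, mul_sum,
      Fintype.sum_prod_type]
    congr! 3
    ring
  simp only [hpow]
  rw [sum_sum_sum_mul_eq_sum_sq Y fun (m : ι × ι × ι) y => y m.1 * y m.2.1 * y m.2.2]
  simp only [Fintype.sum_prod_type]

end Moments

section Energy

variable {ι : Type*} [Fintype ι] {Y : Finset (EuclideanSpace ℝ ι)}

/-- The sum of the Gegenbauer kernel `Q_k(⟪a, b⟫)` over all ordered pairs of points of `Y`, the
diagonal included. A nonempty set `Y` of unit vectors is a spherical `t`-design exactly when this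
vanishes for `1 ≤ k ≤ t`. -/
noncomputable def gegEnergy (k : ℕ) (Y : Finset (EuclideanSpace ℝ ι)) : ℝ :=
  ∑ a ∈ Y, ∑ b ∈ Y, geg (Fintype.card ι) k ⟪a, b⟫

lemma gegEnergy_zero (Y : Finset (EuclideanSpace ℝ ι)) : gegEnergy 0 Y = (#Y : ℝ) ^ 2 := by
  simp [gegEnergy, geg, sq]

lemma gegEnergy_one (Y : Finset (EuclideanSpace ℝ ι)) :
    gegEnergy 1 Y = Fintype.card ι * ∑ i, (∑ y ∈ Y, y i) ^ 2 := by
  simp only [gegEnergy, geg_one, ← mul_sum, sum_sum_inner]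

lemma sum_sum_coord_mul_self (hY : ∀ y ∈ Y, ‖y‖ = 1) : ∑ i, ∑ y ∈ Y, y i * y i = #Y := by
  rw [sum_comm, sum_congr rfl fun y hy => sum_coord_mul_self (hY y hy)]
  simp

variable [Nonempty ι]

lemma gegEnergy_two [DecidableEq ι] (hY : ∀ y ∈ Y, ‖y‖ = 1) :
    gegEnergy 2 Y = Fintype.card ι * (Fintype.card ι + 2) / 2 *
      ∑ i, ∑ j, (∑ y ∈ Y, y i * y j - if i = j then (#Y : ℝ) / Fintype.card ι else 0) ^ 2 := by
  have hcard : (0 : ℝ) < Fintype.card ι := by exact_mod_cast Fintype.card_pos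
  rw [sum_sq_sub_scalar, sum_sum_coord_mul_self hY, ← sum_sum_inner_sq]
  simp only [gegEnergy, geg_two hcard, ← mul_sum, sum_sub_distrib, sum_const, nsmul_eq_mul]
  field_simp
  ring

lemma gegEnergy_three (Y : Finset (EuclideanSpace ℝ ι)) :
    gegEnergy 3 Y = Fintype.card ι * (Fintype.card ι + 2) * (Fintype.card ι + 4) / 6 *
      (∑ i, ∑ j, ∑ k, (∑ y ∈ Y, y i * y j * y k) ^ 2 -
        3 / (Fintype.card ι + 2) * ∑ i, (∑ y ∈ Y, y i) ^ 2) := by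
  have hcard : (0 : ℝ) < Fintype.card ι := by exact_mod_cast Fintype.card_pos
  simp only [gegEnergy, geg_three hcard, ← mul_sum, sum_sub_distrib, sum_sum_inner,
    sum_sum_inner_cube]

lemma gegEnergy_three_nonneg (hY : ∀ y ∈ Y, ‖y‖ = 1) : 0 ≤ gegEnergy 3 Y := by
  have htrace (i : ι) : ∑ j, ∑ y ∈ Y, y i * y j * y j = ∑ y ∈ Y, y i := by
    rw [sum_comm]
    refine sum_congr rfl fun y hy => ?_
    simp only [mul_assoc, ← mul_sum, sum_coord_mul_self (hY y hy), mul_one]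
  have hle := sum_trace_sq_le_sum_sq (T := fun i j k => ∑ y ∈ Y, y i * y j * y k)
    (fun i j k => by simp only [mul_comm]) (fun i j k => by simp only [mul_right_comm])
  simp only [htrace] at hle
  rw [gegEnergy_three]
  exact mul_nonneg (by positivity) (sub_nonneg.2 hle)

lemma gegEnergy_nonneg (hY : ∀ y ∈ Y, ‖y‖ = 1) (k : Fin 4) : 0 ≤ gegEnergy k Y := by
  classical
  fin_cases k
  · exact (gegEnergy_zero Y).symm ▸ sq_nonneg _
  · exact (gegEnergy_one Y).symm ▸ by positivity
  · exact (gegEnergy_two hY).symm ▸ by positivity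
  · exact gegEnergy_three_nonneg hY

lemma first_moment_eq_zero (h : gegEnergy 1 Y = 0) (i : ι) : ∑ y ∈ Y, y i = 0 := by
  have hcard : (Fintype.card ι : ℝ) ≠ 0 := by exact_mod_cast Fintype.card_ne_zero
  rw [gegEnergy_one] at h
  have hsum := (mul_eq_zero.1 h).resolve_left hcard
  rw [Fintype.sum_eq_zero_iff_of_nonneg fun _ => sq_nonneg _] at hsum
  exact pow_eq_zero_iff two_ne_zero |>.1 (congrFun hsum i)

lemma second_moment_eq [DecidableEq ι] (hY : ∀ y ∈ Y, ‖y‖ = 1) (h : gegEnergy 2 Y = 0)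
    (i j : ι) : ∑ y ∈ Y, y i * y j = if i = j then (#Y : ℝ) / Fintype.card ι else 0 := by
  have hcard : (0 : ℝ) < Fintype.card ι := by exact_mod_cast Fintype.card_pos
  rw [gegEnergy_two hY, ← Fintype.sum_prod_type'] at h
  have hsum := (mul_eq_zero.1 h).resolve_left (by positivity)
  rw [Fintype.sum_eq_zero_iff_of_nonneg fun _ => sq_nonneg _] at hsum
  exact sub_eq_zero.1 (pow_eq_zero_iff two_ne_zero |>.1 (congrFun hsum (i, j)))

lemma third_moment_eq_zero (h₁ : gegEnergy 1 Y = 0) (h₃ : gegEnergy 3 Y = 0) (i j k : ι) :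
    ∑ y ∈ Y, y i * y j * y k = 0 := by
  have hcard : (0 : ℝ) < Fintype.card ι := by exact_mod_cast Fintype.card_pos
  rw [gegEnergy_three] at h₃
  have hsum := (mul_eq_zero.1 h₃).resolve_left (by positivity)
  simp only [first_moment_eq_zero h₁, ← Fintype.sum_prod_type', ne_eq, two_ne_zero,
    not_false_eq_true, zero_pow, sum_const_zero, mul_zero, sub_zero] at hsum
  rw [Fintype.sum_eq_zero_iff_of_nonneg fun _ => sq_nonneg _] at hsum
  exact pow_eq_zero_iff two_ne_zero |>.1 (congrFun hsum (i, j, k))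

end Energy

section LinearProgramming

lemma sum_sum_inner_le_card_mul {E : Type*} [NormedAddCommGroup E] [InnerProductSpace ℝ E]
    {Y : Finset E} (hY : ∀ y ∈ Y, ‖y‖ = 1) {F : ℝ → ℝ}
    (hF : ∀ a ∈ Y, ∀ b ∈ Y, a ≠ b → F ⟪a, b⟫ ≤ 0) :
    ∑ a ∈ Y, ∑ b ∈ Y, F ⟪a, b⟫ ≤ #Y * F 1 := by
  classical
  have hrow : ∀ a ∈ Y, ∑ b ∈ Y, F ⟪a, b⟫ ≤ F 1 := fun a ha => by
    have hdiag : ⟪a, a⟫ = 1 := by rw [real_inner_self_eq_norm_sq, hY a ha, one_pow]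
    rw [← add_sum_erase Y _ ha, hdiag, add_le_iff_nonpos_right]
    exact sum_nonpos fun b hb => hF a ha b (mem_of_mem_erase hb) (ne_of_mem_erase hb).symm
  simpa using sum_le_card_nsmul Y _ (F 1) hrow

variable {ι : Type*} [Fintype ι] {Y : Finset (EuclideanSpace ℝ ι)}

lemma gegEnergy_eq_zero_of_tight {d : ℕ} (hY : ∀ y ∈ Y, ‖y‖ = 1) {f : Fin (d + 1) → ℝ}
    (hf : ∀ k ≠ 0, 0 < f k) (henergy : ∀ k : Fin (d + 1), 0 ≤ gegEnergy k Y)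
    (hoff : ∀ a ∈ Y, ∀ b ∈ Y, a ≠ b → ∑ k, f k * geg (Fintype.card ι) k ⟪a, b⟫ ≤ 0)
    (htight : ∑ k, f k * geg (Fintype.card ι) k 1 ≤ #Y * f 0) {k : Fin (d + 1)} (hk : k ≠ 0) :
    gegEnergy k Y = 0 := by
  have hnonneg : ∀ l ∈ univ.erase (0 : Fin (d + 1)), 0 ≤ f l * gegEnergy l Y := fun l hl =>
    mul_nonneg (hf l (ne_of_mem_erase hl)).le (henergy l)
  have hsum : ∑ l, f l * gegEnergy l Y ≤ f 0 * gegEnergy 0 Y := calc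
    ∑ l, f l * gegEnergy l Y = ∑ a ∈ Y, ∑ b ∈ Y, ∑ l, f l * geg (Fintype.card ι) l ⟪a, b⟫ := by
      simp only [gegEnergy, mul_sum, sum_comm (s := Y) (t := univ)]
    _ ≤ #Y * ∑ l, f l * geg (Fintype.card ι) l 1 :=
      sum_sum_inner_le_card_mul hY (F := fun x => ∑ l, f l * geg (Fintype.card ι) l x) hoff
    _ ≤ #Y * (#Y * f 0) := by gcongr
    _ = f 0 * gegEnergy 0 Y := by rw [gegEnergy_zero]; ring
  rw [← add_sum_erase _ _ (mem_univ 0), Fin.val_zero, add_le_iff_nonpos_right] at hsum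
  have hterm := (sum_eq_zero_iff_of_nonneg hnonneg).1 (hsum.antisymm (sum_nonneg hnonneg)) k
    (mem_erase.2 ⟨hk, mem_univ k⟩)
  exact (mul_eq_zero.1 hterm).resolve_left (hf k hk).ne'

end LinearProgramming

section SphereMeasure

variable {E : Type*} [NormedAddCommGroup E] [NormedSpace ℝ E]

/-- The restriction of a linear isometry to the unit sphere. -/
def sphereHomeomorph (e : E ≃ₗᵢ[ℝ] E) : Metric.sphere (0 : E) 1 ≃ₜ Metric.sphere (0 : E) 1 :=
  e.toHomeomorph.subtype fun x => by simp

open scoped Pointwise in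
lemma measurePreserving_sphereHomeomorph [MeasurableSpace E] [BorelSpace E] {μ : Measure E}
    {e : E ≃ₗᵢ[ℝ] E} (he : MeasurePreserving e μ μ) :
    MeasurePreserving (sphereHomeomorph e) μ.toSphere μ.toSphere := by
  have hmeas := (sphereHomeomorph e).continuous.measurable
  refine ⟨hmeas, Measure.ext fun s hs => ?_⟩
  have hpreimage : Subtype.val '' (sphereHomeomorph e ⁻¹' s) = e ⁻¹' (Subtype.val '' s) := by
    ext x
    constructor
    · rintro ⟨z, hz, rfl⟩
      exact ⟨_, hz, rfl⟩
    · rintro ⟨w, hw, hwx⟩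
      obtain ⟨z, rfl⟩ := (sphereHomeomorph e).surjective w
      exact ⟨z, hw, e.injective hwx⟩
  have hcone (A : Set E) : Set.Ioo (0 : ℝ) 1 • e ⁻¹' A = e ⁻¹' (Set.Ioo (0 : ℝ) 1 • A) := by
    have himage (B : Set E) : e ⁻¹' B = e.symm '' B :=
      (e.toLinearEquiv.image_symm_eq_preimage B).symm
    rw [himage, himage]
    exact (Set.image_image2_distrib_right fun r x => map_smul e.symm r x).symm
  rw [Measure.map_apply hmeas hs, μ.toSphere_apply' hs, μ.toSphere_apply' (hmeas hs), hpreimage,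
    hcone, he.measure_preimage_emb e.toHomeomorph.measurableEmbedding]

end SphereMeasure

section SphereMean

variable {ι : Type*} [Fintype ι]

/-- The average of `g` over the unit sphere with respect to the surface measure; `0` when the
sphere is empty. -/
noncomputable def sphereMean (g : EuclideanSpace ℝ ι → ℝ) : ℝ :=
  (∫ x : Metric.sphere (0 : EuclideanSpace ℝ ι) 1, g x
    ∂((volume : Measure (EuclideanSpace ℝ ι)).toSphere)) /
  (((volume : Measure (EuclideanSpace ℝ ι)).toSphere Set.univ).toReal)

lemma sphereMean_comp (g : EuclideanSpace ℝ ι → ℝ)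
    (e : EuclideanSpace ℝ ι ≃ₗᵢ[ℝ] EuclideanSpace ℝ ι) :
    sphereMean (fun x => g (e x)) = sphereMean g :=
  congrArg (· / _) <| (measurePreserving_sphereHomeomorph e.measurePreserving).integral_comp
    (sphereHomeomorph e).measurableEmbedding fun x => g x

lemma sphereMean_const_mul (c : ℝ) (g : EuclideanSpace ℝ ι → ℝ) :
    sphereMean (fun x => c * g x) = c * sphereMean g := by
  simp only [sphereMean, integral_const_mul, mul_div_assoc]

lemma sphereMean_neg (g : EuclideanSpace ℝ ι → ℝ) :
    sphereMean (fun x => -g x) = -sphereMean g := by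
  simp only [sphereMean, integral_neg, neg_div]

lemma sphereMean_sum {κ : Type*} (s : Finset κ) {g : κ → EuclideanSpace ℝ ι → ℝ}
    (hg : ∀ m ∈ s, Continuous (g m)) :
    sphereMean (fun x => ∑ m ∈ s, g m x) = ∑ m ∈ s, sphereMean (g m) := by
  have hint : ∀ m ∈ s, Integrable (fun x : Metric.sphere (0 : EuclideanSpace ℝ ι) 1 => g m x)
      (volume : Measure (EuclideanSpace ℝ ι)).toSphere := fun m hm =>
    ((hg m hm).comp continuous_subtype_val).integrable_of_hasCompactSupport
      (HasCompactSupport.of_compactSpace _)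
  simp only [sphereMean, integral_finsetSum s hint, sum_div]

lemma sphereMean_eq_zero_of_comp_eq_neg {g : EuclideanSpace ℝ ι → ℝ}
    (e : EuclideanSpace ℝ ι ≃ₗᵢ[ℝ] EuclideanSpace ℝ ι) (hg : ∀ x, g (e x) = -g x) :
    sphereMean g = 0 := by
  have hcomp := sphereMean_comp g e
  simp only [hg, sphereMean_neg] at hcomp
  linarith

lemma sphereMean_eq_zero_of_odd {g : EuclideanSpace ℝ ι → ℝ} (hg : ∀ x, g (-x) = -g x) :
    sphereMean g = 0 :=
  sphereMean_eq_zero_of_comp_eq_neg (LinearIsometryEquiv.neg ℝ) hg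

lemma sphereMean_eq_const [Nonempty ι] {g : EuclideanSpace ℝ ι → ℝ} {c : ℝ}
    (hg : ∀ x, ‖x‖ = 1 → g x = c) : sphereMean g = c := by
  have hsphere : ((volume : Measure (EuclideanSpace ℝ ι)).toSphere Set.univ).toReal ≠ 0 :=
    ENNReal.toReal_ne_zero.2
      ⟨Measure.measure_univ_ne_zero.2 (Measure.toSphere_ne_zero _), measure_ne_top _ _⟩
  have hcongr (x : Metric.sphere (0 : EuclideanSpace ℝ ι) 1) : g x = c := hg x (by simp)
  simp only [sphereMean, hcongr, integral_const, smul_eq_mul, Measure.real]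
  exact mul_div_cancel_left₀ c hsphere

lemma sphereMean_coord_mul_coord_of_ne {i j : ι} (hij : i ≠ j) :
    sphereMean (fun x => x i * x j) = 0 := by
  classical
  let reflection : EuclideanSpace ℝ ι ≃ₗᵢ[ℝ] EuclideanSpace ℝ ι :=
    LinearIsometryEquiv.piLpCongrRight 2 fun k =>
      if k = i then LinearIsometryEquiv.neg ℝ else LinearIsometryEquiv.refl ℝ ℝ
  exact sphereMean_eq_zero_of_comp_eq_neg reflection fun x => by simp [reflection, hij.symm]

lemma sphereMean_coord_mul_self (i : ι) :
    sphereMean (fun x : EuclideanSpace ℝ ι => x i * x i) = 1 / Fintype.card ι := by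
  classical
  have : Nonempty ι := ⟨i⟩
  have hcard : (Fintype.card ι : ℝ) ≠ 0 := by exact_mod_cast Fintype.card_ne_zero
  have hswap (j : ι) : sphereMean (fun x : EuclideanSpace ℝ ι => x j * x j) =
      sphereMean (fun x : EuclideanSpace ℝ ι => x i * x i) := by
    simpa [LinearIsometryEquiv.piLpCongrLeft_apply] using sphereMean_comp (fun x => x i * x i)
      (LinearIsometryEquiv.piLpCongrLeft 2 ℝ ℝ (Equiv.swap i j))
  have hsum := sphereMean_sum univ (g := fun (j : ι) x => x j * x j) fun j _ => by fun_prop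
  rw [sphereMean_eq_const fun _ => sum_coord_mul_self, sum_congr rfl fun j _ => hswap j, sum_const,
    card_univ, nsmul_eq_mul] at hsum
  rw [hsum, mul_div_cancel_left₀ _ hcard]

lemma sphereMean_coord_mul_coord [DecidableEq ι] (i j : ι) :
    sphereMean (fun x : EuclideanSpace ℝ ι => x i * x j) =
      if i = j then 1 / (Fintype.card ι : ℝ) else 0 := by
  split_ifs with hij
  · exact hij ▸ sphereMean_coord_mul_self i
  · exact sphereMean_coord_mul_coord_of_ne hij

end SphereMean

section Design

lemma eval_eq_sum_coeff_mul_prod_toMultiset {ι : Type*} (p : MvPolynomial ι ℝ)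
    (x : ι → ℝ) :
    MvPolynomial.eval x p =
      ∑ d ∈ p.support, p.coeff d * ((Finsupp.toMultiset d).map x).prod := by
  rw [MvPolynomial.eval_eq]
  refine sum_congr rfl fun d _ => ?_
  rw [Finsupp.toMultiset_map, Finsupp.prod_toMultiset, Finsupp.prod_mapDomain_index (by simp)
    (by simp [pow_add]), Finsupp.prod]

variable {ι : Type*} [Fintype ι] {Y : Finset (EuclideanSpace ℝ ι)}

/-- `Y` is a spherical `t`-design: it lies on the unit sphere, and averaging a polynomial of degree
at most `t` over `Y` gives its average over the sphere. -/
structure IsSphericalDesign (t : ℕ) (Y : Finset (EuclideanSpace ℝ ι)) : Prop where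
  norm_eq_one : ∀ y ∈ Y, ‖y‖ = 1
  average_eq : ∀ p : MvPolynomial ι ℝ, p.totalDegree ≤ t →
    (∑ y ∈ Y, MvPolynomial.eval (fun i => y i) p) / (#Y : ℝ) =
      sphereMean fun x => MvPolynomial.eval (fun i => x i) p

lemma isSphericalDesign_of_forall_multiset {t : ℕ} (hY : ∀ y ∈ Y, ‖y‖ = 1)
    (h : ∀ s : Multiset ι, s.card ≤ t → (∑ y ∈ Y, (s.map fun i => y i).prod) / (#Y : ℝ) =
      sphereMean fun x => (s.map fun i => x i).prod) :
    IsSphericalDesign t Y := by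
  refine ⟨hY, fun p hp => ?_⟩
  simp only [eval_eq_sum_coeff_mul_prod_toMultiset]
  have hcont (d : ι →₀ ℕ) : Continuous fun x : EuclideanSpace ℝ ι =>
      p.coeff d * ((Finsupp.toMultiset d).map fun i => x i).prod :=
    continuous_const.mul (continuous_multiset_prod _ fun i _ => by fun_prop)
  rw [sum_comm, sphereMean_sum _ fun d _ => hcont d, sum_div]
  refine sum_congr rfl fun d hd => ?_
  have hcard : (Finsupp.toMultiset d).card ≤ t := by
    rw [Finsupp.card_toMultiset]
    exact (MvPolynomial.le_totalDegree hd).trans hp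
  rw [sphereMean_const_mul, ← h _ hcard, ← mul_sum, mul_div_assoc]

lemma isSphericalDesign_three_of_moments [DecidableEq ι] [Nonempty ι] (hne : Y.Nonempty)
    (hY : ∀ y ∈ Y, ‖y‖ = 1) (hone : ∀ i, ∑ y ∈ Y, y i = 0)
    (htwo : ∀ i j, ∑ y ∈ Y, y i * y j = if i = j then (#Y : ℝ) / Fintype.card ι else 0)
    (hthree : ∀ i j k, ∑ y ∈ Y, y i * y j * y k = 0) :
    IsSphericalDesign 3 Y := by
  have hcard : (#Y : ℝ) ≠ 0 := by exact_mod_cast hne.card_ne_zero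
  refine isSphericalDesign_of_forall_multiset hY fun s hs => ?_
  obtain h | h | h | h : s.card = 0 ∨ s.card = 1 ∨ s.card = 2 ∨ s.card = 3 := by omega
  · obtain rfl := Multiset.card_eq_zero.1 h
    rw [sphereMean_eq_const (c := 1) fun _ _ => by simp]
    simp [hcard]
  · obtain ⟨i, rfl⟩ := Multiset.card_eq_one.1 h
    simp only [Multiset.map_singleton, Multiset.prod_singleton, hone, zero_div]
    exact (sphereMean_eq_zero_of_odd fun x => by simp).symm
  · obtain ⟨i, j, rfl⟩ := Multiset.card_eq_two.1 h
    simp only [Multiset.insert_eq_cons, Multiset.map_cons, Multiset.prod_cons,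
      Multiset.map_singleton, Multiset.prod_singleton, htwo, sphereMean_coord_mul_coord]
    split_ifs
    · field_simp
    · exact zero_div _
  · obtain ⟨i, j, k, rfl⟩ := Multiset.card_eq_three.1 h
    simp only [Multiset.insert_eq_cons, Multiset.map_cons, Multiset.prod_cons,
      Multiset.map_singleton, Multiset.prod_singleton, ← mul_assoc, hthree, zero_div]
    exact (sphereMean_eq_zero_of_odd fun x => by simp).symm

/-- The equality case of the linear programming bound `|Y| ≤ F(1) / f₀` for `F = ∑ f_k Q_k`. -/
theorem stmt_13_general (hne : Y.Nonempty) (hY : ∀ y ∈ Y, ‖y‖ = 1) {f : Fin 4 → ℝ}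
    (hf : ∀ k ≠ 0, 0 < f k)
    (hoff : ∀ a ∈ Y, ∀ b ∈ Y, a ≠ b → ∑ k, f k * geg (Fintype.card ι) k ⟪a, b⟫ ≤ 0)
    (htight : ∑ k, f k * geg (Fintype.card ι) k 1 ≤ #Y * f 0) :
    IsSphericalDesign 3 Y := by
  classical
  obtain ⟨y, hy⟩ := hne
  have : Nonempty ι := by
    by_contra hι
    rw [not_nonempty_iff] at hι
    simpa [Subsingleton.elim y 0] using hY y hy
  have henergy {k : Fin 4} (hk : k ≠ 0) : gegEnergy k Y = 0 :=
    gegEnergy_eq_zero_of_tight hY hf (gegEnergy_nonneg hY) hoff htight hk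
  have h₁ : gegEnergy 1 Y = 0 := henergy (k := 1) (by decide)
  have h₂ : gegEnergy 2 Y = 0 := henergy (k := 2) (by decide)
  have h₃ : gegEnergy 3 Y = 0 := henergy (k := 3) (by decide)
  exact isSphericalDesign_three_of_moments ⟨y, hy⟩ hY (first_moment_eq_zero h₁)
    (second_moment_eq hY h₂) (third_moment_eq_zero h₁ h₃)

end Design

/-- A 3-distance set of unit vectors in ℝⁿ whose annihilator polynomial has a
Gegenbauer expansion F = Σ_{k≤3} f_k Q_k with all f_k > 0 and f₀ = 1/|Y| is a spherical
3-design: the average over Y of every polynomial of degree ≤ 3 equals its average over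
the unit sphere. -/
theorem stmt_13 (n : ℕ) (Y : Finset (EuclideanSpace ℝ (Fin n)))
    (hY : Y.Nonempty)
    (hunit : ∀ y ∈ Y, ‖y‖ = 1)
    (α β γ : ℝ) (hαβ : β < α) (hβγ : γ < β)
    (hval : ∀ a ∈ Y, ∀ b ∈ Y, a ≠ b → ⟪a, b⟫ ∈ ({α, β, γ} : Set ℝ))
    (hattα : ∃ a ∈ Y, ∃ b ∈ Y, a ≠ b ∧ ⟪a, b⟫ = α)
    (hattβ : ∃ a ∈ Y, ∃ b ∈ Y, a ≠ b ∧ ⟪a, b⟫ = β)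
    (hattγ : ∃ a ∈ Y, ∃ b ∈ Y, a ≠ b ∧ ⟪a, b⟫ = γ)
    (f : Fin 4 → ℝ) (hfpos : ∀ k, 0 < f k) (hf0 : f 0 = 1 / (Y.card : ℝ))
    (hexp : ∀ x : ℝ, ((x - α) * (x - β) * (x - γ)) / ((1 - α) * (1 - β) * (1 - γ)) =
        ∑ k : Fin 4, f k * geg n k x) :
    ∀ p : MvPolynomial (Fin n) ℝ, p.totalDegree ≤ 3 →
      (∑ y ∈ Y, MvPolynomial.eval (fun i => y i) p) / (Y.card : ℝ) =
        (∫ x : Metric.sphere (0 : EuclideanSpace ℝ (Fin n)) 1,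
            MvPolynomial.eval (fun i => (x : EuclideanSpace ℝ (Fin n)) i) p
          ∂((volume : Measure (EuclideanSpace ℝ (Fin n))).toSphere)) /
        (((volume : Measure (EuclideanSpace ℝ (Fin n))).toSphere Set.univ).toReal) := by
  refine (stmt_13_general hY hunit (fun k _ => hfpos k) (fun a ha b hb hab => ?_) ?_).average_eq
  · rw [Fintype.card_fin, ← hexp]
    obtain h | h | h : ⟪a, b⟫ = α ∨ ⟪a, b⟫ = β ∨ ⟪a, b⟫ = γ := hval a ha b hb hab
    all_goals simp [h]
  · rw [Fintype.card_fin, ← hexp, hf0, mul_one_div_cancel (by exact_mod_cast hY.card_ne_zero)]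
    exact div_self_le_one _
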